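/- Let n be an odd prime and a, b integers with 1 ≤ a, b ≤ n-1. Then for any integer m with 1 ≤ m < n, |Σ_{k=1}^{n} sign(cos(2πak/n)) sign(cos(2πbk/n))| ≤ (2/(m+2) + Σ_{ℓ=1}^{m} 12/(ℓ·‖ℓ a⁻¹ b‖)) · n + C, for an absolute constant C. -/

import Mathlib

open Real Finset

/-- `sign(x) = 1` if `x ≥ 0` and `-1` otherwise. -/
noncomputable def sgn (x : ℝ) : ℝ := if 0 ≤ x then 1 else -1

/-- Toroidal distance of `x` to `0` in `ℤ/nℤ`: `min (x mod n) (n - x mod n)`. -/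
def tdist (n x : ℕ) : ℕ := min (x % n) (n - x % n)


noncomputable def cc (q i : ℕ) : ℝ := sin (((i : ℝ) + 1) * (π / (q + 2)))

noncomputable def sig (q : ℕ) : ℝ := ∑ i ∈ range (q + 1), cc q i ^ 2

noncomputable def PP (q : ℕ) (θ : ℝ) : ℝ :=
  ∑ i ∈ range (q + 1), ∑ j ∈ range (q + 1), cc q i * cc q j * cos (2 * ((i : ℝ) - j) * θ)

noncomputable def om (i j : ℕ) : ℝ := 2 * ((i : ℝ) - j) + 1

noncomputable def GG (q : ℕ) (ψ : ℝ) : ℝ :=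
  ∑ i ∈ range (q + 1), ∑ j ∈ range (q + 1), cc q i * cc q j * (sin (om i j * ψ) / om i j)

theorem om_ne (i j : ℕ) : om i j ≠ 0 := by
  unfold om
  have : (2 * ((i : ℤ) - j) + 1) ≠ 0 := by omega
  exact_mod_cast this

theorem PP_nonneg (q : ℕ) (θ : ℝ) : 0 ≤ PP q θ := by
  have : PP q θ = (∑ i ∈ range (q + 1), cc q i * cos (2 * i * θ)) ^ 2
      + (∑ i ∈ range (q + 1), cc q i * sin (2 * i * θ)) ^ 2 := by
    rw [pow_two, pow_two, sum_mul_sum, sum_mul_sum, ← sum_add_distrib]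
    unfold PP
    refine sum_congr rfl fun i _ => ?_
    rw [← sum_add_distrib]
    refine sum_congr rfl fun j _ => ?_
    rw [show 2 * ((i : ℝ) - j) * θ = 2 * i * θ - 2 * j * θ by ring, cos_sub]
    ring
  rw [this]; positivity

theorem PP_cont (q : ℕ) : Continuous (PP q) := by
  unfold PP; fun_prop

theorem cosPP (q : ℕ) (θ : ℝ) : cos θ * PP q θ =
    ∑ i ∈ range (q + 1), ∑ j ∈ range (q + 1), cc q i * cc q j * cos (om i j * θ) := by
  have h1 : ∑ i ∈ range (q + 1), ∑ j ∈ range (q + 1), cc q i * cc q j * sin (2 * ((i : ℝ) - j) * θ)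
      = 0 := by
    have : ∑ i ∈ range (q + 1), ∑ j ∈ range (q + 1), cc q i * cc q j * sin (2 * ((i : ℝ) - j) * θ)
      = - ∑ i ∈ range (q + 1), ∑ j ∈ range (q + 1),
        cc q i * cc q j * sin (2 * ((i : ℝ) - j) * θ) := by
      conv_lhs => rw [sum_comm]
      rw [← sum_neg_distrib]
      refine sum_congr rfl fun i _ => ?_
      rw [← sum_neg_distrib]
      refine sum_congr rfl fun j _ => ?_
      rw [show 2 * ((i : ℝ) - j) * θ = - (2 * ((j : ℝ) - i) * θ) by ring, sin_neg]
      ring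
    linarith
  have h2 : cos θ * PP q θ = cos θ * PP q θ - sin θ * ∑ i ∈ range (q + 1), ∑ j ∈ range (q + 1), cc q i * cc q j * sin (2 * ((i : ℝ) - j) * θ) := by
    rw [h1]; ring
  rw [h2]
  unfold PP om
  simp only [mul_sum]
  rw [← sum_sub_distrib]
  refine sum_congr rfl fun i _ => ?_
  rw [← sum_sub_distrib]
  refine sum_congr rfl fun j _ => ?_
  rw [add_mul, one_mul, cos_add]
  ring

theorem GG_deriv (q : ℕ) (ψ : ℝ) : HasDerivAt (GG q) (cos ψ * PP q ψ) ψ := by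
  rw [cosPP]
  unfold GG
  refine HasDerivAt.fun_sum fun i _ => HasDerivAt.fun_sum fun j _ => ?_
  have h := om_ne i j
  have h1 : HasDerivAt (fun x => om i j * x) (om i j) ψ := by
    simpa using (hasDerivAt_id ψ).const_mul (om i j)
  have := ((h1.sin).div_const (om i j)).const_mul (cc q i * cc q j)
  rw [mul_div_cancel_right₀ _ h] at this
  exact this

theorem GG_int (q : ℕ) (s t : ℝ) : ∫ θ in s..t, cos θ * PP q θ = GG q t - GG q s := by
  apply intervalIntegral.integral_eq_sub_of_hasDerivAt
  · intro x _; exact GG_deriv q x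
  · exact (continuous_cos.mul (PP_cont q)).intervalIntegrable _ _

theorem GG_zero (q : ℕ) : GG q 0 = 0 := by simp [GG]

theorem sin_om (i j : ℕ) (ψ : ℝ) : sin (om i j * (ψ + π)) = - sin (om i j * ψ) := by
  unfold om
  rw [show (2 * ((i : ℝ) - j) + 1) * (ψ + π) = (2 * ((i : ℝ) - j) + 1) * ψ + π + (((i:ℤ) - j : ℤ) : ℝ) * (2 * π) by push_cast; ring]
  rw [sin_add_int_mul_two_pi, sin_add_pi]

theorem GG_add_pi (q : ℕ) (ψ : ℝ) : GG q (ψ + π) = - GG q ψ := by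
  unfold GG
  rw [← sum_neg_distrib]
  refine sum_congr rfl fun i _ => ?_
  rw [← sum_neg_distrib]
  refine sum_congr rfl fun j _ => ?_
  rw [sin_om]; ring

theorem GG_neg (q : ℕ) (ψ : ℝ) : GG q (-ψ) = - GG q ψ := by
  unfold GG
  rw [← sum_neg_distrib]
  refine sum_congr rfl fun i _ => ?_
  rw [← sum_neg_distrib]
  refine sum_congr rfl fun j _ => ?_
  rw [mul_neg, sin_neg]; ring

theorem orth (d : ℤ) : ∫ θ in (0:ℝ)..(π/2), cos (2 * d * θ) = if d = 0 then π / 2 else 0 := by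
  split_ifs with h
  · subst h; simp
  · have hd : (2 * (d:ℝ)) ≠ 0 := by
      have : (d:ℝ) ≠ 0 := by exact_mod_cast h
      positivity
    rw [intervalIntegral.integral_comp_mul_left (fun x => cos x) hd]
    rw [integral_cos, show 2 * (d:ℝ) * (π/2) = d * π by ring, sin_int_mul_pi]
    simp

theorem int_PP (q : ℕ) : ∫ θ in (0:ℝ)..(π/2), PP q θ = π / 2 * sig q := by
  unfold PP sig
  rw [intervalIntegral.integral_finsetSum
    (fun i _ => Continuous.intervalIntegrable (by fun_prop) _ _), mul_sum]
  refine sum_congr rfl fun i hi => ?_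
  rw [intervalIntegral.integral_finsetSum
    (fun i _ => Continuous.intervalIntegrable (by fun_prop) _ _)]
  rw [sum_eq_single i]
  · simp; ring
  · intro j _ hj
    have := orth ((i:ℤ) - j)
    push_cast at this
    rw [intervalIntegral.integral_const_mul, this, if_neg (by omega), mul_zero]
  · intro h; exact absurd hi h

theorem cc_rec (q M : ℕ) : ∑ i ∈ range M, (cc q i * cc q (i+1) - cos (π / (q + 2)) * cc q i ^ 2)
    = sin (M * (π / (q + 2))) * cc q M / 2 := by
  induction M with
  | zero => simp
  | succ M ih =>
    rw [sum_range_succ, ih]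
    unfold cc
    push_cast
    have h1 : sin (((M:ℝ) + 1 + 1) * (π / (q + 2))) = sin (((M:ℝ) + 1) * (π / (q + 2))) * cos (π / (q + 2)) + cos (((M:ℝ) + 1) * (π / (q + 2))) * sin (π / (q + 2)) := by
      rw [← sin_add]; congr 1; ring
    have h2 : sin ((M:ℝ) * (π / (q + 2))) = sin (((M:ℝ) + 1) * (π / (q + 2))) * cos (π / (q + 2)) - cos (((M:ℝ) + 1) * (π / (q + 2))) * sin (π / (q + 2)) := by
      rw [← sin_sub]; congr 1; ring
    rw [h1, h2]; ring

theorem cc_last (q : ℕ) : cc q (q + 1) = 0 := by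
  unfold cc
  rw [show (((q + 1 : ℕ) : ℝ) + 1) * (π / (q + 2)) = π by push_cast; field_simp; ring]
  exact sin_pi

theorem cc_sum (q : ℕ) : ∑ i ∈ range (q + 1), cc q i * cc q (i+1) = cos (π / (q + 2)) * sig q := by
  have := cc_rec q (q + 1)
  rw [cc_last, sum_sub_distrib, ← mul_sum] at this
  unfold sig
  linarith

theorem int_cosPP (q : ℕ) : ∫ θ in (0:ℝ)..(π/2), cos (2 * θ) * PP q θ
    = π / 2 * (cos (π / (q + 2)) * sig q) := by
  have key : ∀ i ∈ range (q + 1), ∑ j ∈ range (q + 1), cc q i * cc q j * (if (i:ℤ) - j + 1 = 0 then π / 2 else 0)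
      = π / 2 * (cc q i * cc q (i + 1)) := by
    intro i hi
    by_cases h : i = q
    · subst h
      rw [cc_last]
      simp only [mul_zero]
      apply sum_eq_zero
      intro j hj
      rw [mem_range] at hj
      rw [if_neg (by omega), mul_zero]
    · rw [mem_range] at hi
      rw [sum_eq_single (i + 1)]
      · rw [if_pos (by push_cast; ring)]; ring
      · intro j _ hj
        rw [if_neg (by omega), mul_zero]
      · intro h'; rw [mem_range] at h'; omega
  have e : ∀ θ, cos (2 * θ) * PP q θ =
      (∑ i ∈ range (q + 1), ∑ j ∈ range (q + 1), cc q i * cc q j * (cos (2 * (((i:ℤ) - j + 1 : ℤ) : ℝ) * θ)) +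
      ∑ i ∈ range (q + 1), ∑ j ∈ range (q + 1), cc q i * cc q j * (cos (2 * (((j:ℤ) - i + 1 : ℤ) : ℝ) * θ))) / 2 := by
    intro θ
    unfold PP
    simp only [mul_sum, sum_div, ← sum_add_distrib]
    refine sum_congr rfl fun i hi => sum_congr rfl fun j hj => ?_
    push_cast
    rw [show 2 * ((i:ℝ) - j + 1) * θ = 2 * ((i:ℝ) - j) * θ + 2 * θ by ring,
      show 2 * ((j:ℝ) - i + 1) * θ = 2 * θ - 2 * ((i:ℝ) - j) * θ by ring, cos_add, cos_sub]
    ring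
  have A : ∫ θ in (0:ℝ)..(π/2), ∑ i ∈ range (q + 1), ∑ j ∈ range (q + 1), cc q i * cc q j * (cos (2 * (((i:ℤ) - j + 1 : ℤ) : ℝ) * θ)) = π / 2 * (cos (π / (q + 2)) * sig q) := by
    rw [intervalIntegral.integral_finsetSum
      (fun i _ => Continuous.intervalIntegrable (by fun_prop) _ _), ← cc_sum, mul_sum]
    refine sum_congr rfl fun i hi => ?_
    rw [← key i hi, intervalIntegral.integral_finsetSum
      (fun i _ => Continuous.intervalIntegrable (by fun_prop) _ _)]
    refine sum_congr rfl fun j hj => ?_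
    rw [intervalIntegral.integral_const_mul, orth]
  have e2 : ∀ θ, cos (2 * θ) * PP q θ = ∑ i ∈ range (q + 1), ∑ j ∈ range (q + 1), cc q i * cc q j * (cos (2 * (((i:ℤ) - j + 1 : ℤ) : ℝ) * θ)) := by
    intro θ
    rw [e]
    have : ∑ i ∈ range (q + 1), ∑ j ∈ range (q + 1), cc q i * cc q j * (cos (2 * (((j:ℤ) - i + 1 : ℤ) : ℝ) * θ)) = ∑ i ∈ range (q + 1), ∑ j ∈ range (q + 1), cc q i * cc q j * (cos (2 * (((i:ℤ) - j + 1 : ℤ) : ℝ) * θ)) := by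
      rw [sum_comm]
      refine sum_congr rfl fun i hi => sum_congr rfl fun j hj => ?_
      ring
    rw [this]; ring
  simp only [e2]
  exact A

theorem sig_pos (q : ℕ) : 0 < sig q := by
  unfold sig
  apply sum_pos
  · intro i hi
    rw [mem_range] at hi
    have : 0 < cc q i := by
      unfold cc
      apply sin_pos_of_pos_of_lt_pi
      · positivity
      · rw [← mul_div_assoc, div_lt_iff₀ (by positivity), mul_comm]
        have : (i:ℝ) + 1 < q + 2 := by exact_mod_cast (by omega : i + 1 < q + 2)
        have := pi_pos
        nlinarith
    positivity
  · simp

theorem ZZ_lower (q : ℕ) : π / 4 * sig q ≤ GG q (π / 2) := by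
  have h := GG_int q 0 (π / 2)
  rw [GG_zero, sub_zero] at h
  rw [← h]
  have h2 : ∫ θ in (0:ℝ)..(π/2), (1 / 2 * PP q θ + 1 / 2 * (cos (2 * θ) * PP q θ)) =
      π / 4 * sig q * (1 + cos (π / (q + 2))) := by
    have c := PP_cont q
    rw [intervalIntegral.integral_add
      (Continuous.intervalIntegrable (by fun_prop) _ _)
      (Continuous.intervalIntegrable (by fun_prop) _ _),
      intervalIntegral.integral_const_mul, intervalIntegral.integral_const_mul,
      int_PP, int_cosPP]
    ring
  have h3 : 0 ≤ cos (π / (q + 2)) := by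
    apply cos_nonneg_of_neg_pi_div_two_le_of_le
    · have : 0 ≤ π / ((q:ℝ) + 2) := by positivity
      have := pi_pos; linarith
    · apply div_le_div_of_nonneg_left pi_pos.le (by norm_num)
      have : (0:ℝ) ≤ q := by positivity
      linarith
  have h4 := sig_pos q
  have hp := pi_pos
  calc π / 4 * sig q ≤ π / 4 * sig q * (1 + cos (π / (q + 2))) := by
        have : 0 ≤ π / 4 * sig q * cos (π / (q + 2)) := by positivity
        linarith
    _ = _ := h2.symm
    _ ≤ _ := by
        have c := PP_cont q
        apply intervalIntegral.integral_mono_on (by positivity)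
          (Continuous.intervalIntegrable (by fun_prop) _ _)
          (Continuous.intervalIntegrable (by fun_prop) _ _)
        intro θ hθ
        have hc : 0 ≤ cos θ := cos_nonneg_of_neg_pi_div_two_le_of_le (by linarith [hθ.1]) hθ.2
        have hc1 := cos_le_one θ
        rw [cos_two_mul]
        have hP := PP_nonneg q θ
        have : cos θ * PP q θ - (1 / 2 * PP q θ + 1 / 2 * ((2 * cos θ ^ 2 - 1) * PP q θ)) = cos θ * (1 - cos θ) * PP q θ := by ring
        have : 0 ≤ cos θ * (1 - cos θ) * PP q θ := by
          have : 0 ≤ 1 - cos θ := by linarith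
          positivity
        linarith

theorem aux_sin (φ : ℝ) (h0 : 0 ≤ φ) (h1 : φ ≤ π / 2) : φ - sin φ ≤ φ * sin φ := by
  rcases le_total φ (3/5) with h | h
  · rcases h0.eq_or_lt with h' | h'
    · subst h'; simp
    · have := sin_gt_sub_cube h'
      have hs : φ - φ ^ 3 / 6 ≤ sin φ := this.le
      have h3 : φ ^ 3 ≤ φ ^ 2 := by nlinarith [mul_nonneg h0 h0]
      have h4 : φ ^ 4 ≤ φ ^ 2 := by nlinarith [mul_nonneg h0 h0]
      nlinarith [mul_nonneg h0 h0, mul_le_mul_of_nonneg_left hs (by linarith : 0 ≤ 1 + φ)]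
  · have := mul_le_sin h0 h1
    have hp : π < 3.15 := pi_lt_d2
    have : 5/8 * φ ≤ sin φ := by
      have : 5 / 8 ≤ 2 / π := by
        rw [le_div_iff₀ pi_pos]; linarith
      nlinarith
    nlinarith

theorem key_ineq (x θ : ℝ) (hx : 0 < x) (hx2 : x ≤ π / 2) (h0 : 0 ≤ θ) (h1 : θ ≤ π / 2) :
    (cos (2 * θ) - cos (2 * x)) / (4 * sin x) ≤ (x - θ) * cos θ := by
  have hs : 0 < sin x := sin_pos_of_pos_of_lt_pi hx (by linarith [pi_pos])
  rw [div_le_iff₀ (by positivity)]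
  have e : cos (2 * θ) - cos (2 * x) = 2 * (sin (x + θ) * sin (x - θ)) := by
    rw [sin_add, sin_sub, cos_two_mul, cos_two_mul]
    nlinarith [sin_sq_add_cos_sq x, sin_sq_add_cos_sq θ]
  have e2 : 2 * (sin x * cos θ) = sin (x + θ) + sin (x - θ) := by
    rw [sin_add, sin_sub]; ring
  have e3 : (x - θ) * cos θ * (4 * sin x) = 2 * ((x - θ) * (sin (x + θ) + sin (x - θ))) := by
    rw [← e2]; ring
  rw [e, e3]
  have hS : 0 ≤ sin (x + θ) := sin_nonneg_of_nonneg_of_le_pi (by linarith) (by linarith)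
  have hS1 := sin_le_one (x + θ)
  rcases le_total θ x with h | h
  · have a : 0 ≤ sin (x - θ) := sin_nonneg_of_nonneg_of_le_pi (by linarith) (by linarith)
    have b : sin (x - θ) ≤ x - θ := sin_le (by linarith)
    have : 0 ≤ (x - θ) * sin (x - θ) := mul_nonneg (by linarith) a
    nlinarith
  · have a := aux_sin (θ - x) (by linarith) (by linarith)
    have b : sin (θ - x) ≤ θ - x := sin_le (by linarith)
    rw [show x - θ = -(θ - x) by ring, sin_neg]
    nlinarith

theorem int_tM (q : ℕ) : ∫ θ in (0:ℝ)..(π/2), θ * (cos θ * PP q θ) ≤ π / (2 * (q + 2)) * GG q (π / 2) := by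
  set x := π / (2 * ((q:ℝ) + 2)) with hx
  have hp := pi_pos
  have hx0 : 0 < x := by positivity
  have hx2 : x ≤ π / 2 := by
    rw [hx]
    apply div_le_div_of_nonneg_left pi_pos.le (by norm_num)
    have : (0:ℝ) ≤ q := by positivity
    linarith
  have c := PP_cont q
  have hy : π / ((q:ℝ) + 2) = 2 * x := by rw [hx]; field_simp
  have h1 : ∫ θ in (0:ℝ)..(π/2), (cos (2 * θ) * PP q θ - cos (2 * x) * PP q θ) / (4 * sin x) = 0 := by
    rw [intervalIntegral.integral_div, intervalIntegral.integral_sub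
      (Continuous.intervalIntegrable (by fun_prop) _ _)
      (Continuous.intervalIntegrable (by fun_prop) _ _),
      intervalIntegral.integral_const_mul,
      int_PP, int_cosPP, hy]
    ring
  have h2 : ∫ θ in (0:ℝ)..(π/2), (x * (cos θ * PP q θ) - θ * (cos θ * PP q θ)) =
      x * GG q (π / 2) - ∫ θ in (0:ℝ)..(π/2), θ * (cos θ * PP q θ) := by
    rw [intervalIntegral.integral_sub
      (Continuous.intervalIntegrable (by fun_prop) _ _)
      (Continuous.intervalIntegrable (by fun_prop) _ _),
      intervalIntegral.integral_const_mul, GG_int, GG_zero, sub_zero]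
  have h3 : ∫ θ in (0:ℝ)..(π/2), (cos (2 * θ) * PP q θ - cos (2 * x) * PP q θ) / (4 * sin x) ≤
      ∫ θ in (0:ℝ)..(π/2), (x * (cos θ * PP q θ) - θ * (cos θ * PP q θ)) := by
    apply intervalIntegral.integral_mono_on (by positivity)
          (Continuous.intervalIntegrable (by fun_prop) _ _)
          (Continuous.intervalIntegrable (by fun_prop) _ _)
    intro θ hθ
    have := mul_le_mul_of_nonneg_right (key_ineq x θ hx0 hx2 hθ.1 hθ.2) (PP_nonneg q θ)
    calc _ = (cos (2 * θ) - cos (2 * x)) / (4 * sin x) * PP q θ := by ring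
      _ ≤ _ := this
      _ = _ := by ring
  linarith

noncomputable def ind (s t : ℝ) : ℝ := if s < t then 1 else 0

noncomputable def II (q : ℕ) (s : ℝ) : ℝ := ∫ t in (0:ℝ)..(π/2), ind s t * (cos t * PP q t)

theorem ind_intble (q : ℕ) (s a b : ℝ) :
    IntervalIntegrable (fun t => ind s t * (cos t * PP q t)) MeasureTheory.volume a b := by
  have c := PP_cont q
  have h : IntervalIntegrable (fun t => cos t * PP q t) MeasureTheory.volume a b :=
    Continuous.intervalIntegrable (by fun_prop) _ _
  have e : (fun t => ind s t * (cos t * PP q t)) = (Set.Ioi s).indicator (fun t => cos t * PP q t) := by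
    ext t
    simp [ind, Set.indicator_apply]
  rw [e]
  exact ⟨h.1.indicator measurableSet_Ioi, h.2.indicator measurableSet_Ioi⟩

theorem ind_nonneg (s t : ℝ) : 0 ≤ ind s t := by unfold ind; split_ifs <;> norm_num

theorem M_nonneg (q : ℕ) (t : ℝ) (h0 : 0 ≤ t) (h1 : t ≤ π / 2) : 0 ≤ cos t * PP q t :=
  mul_nonneg (cos_nonneg_of_neg_pi_div_two_le_of_le (by linarith [pi_pos]) h1) (PP_nonneg q t)

theorem II_nonneg (q : ℕ) (s : ℝ) : 0 ≤ II q s := by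
  apply intervalIntegral.integral_nonneg (by positivity)
  intro t ht
  exact mul_nonneg (ind_nonneg s t) (M_nonneg q t ht.1 ht.2)

theorem II_eq (q : ℕ) (s : ℝ) (h0 : 0 ≤ s) (h1 : s ≤ π / 2) : II q s = GG q (π / 2) - GG q s := by
  unfold II
  rw [← intervalIntegral.integral_add_adjacent_intervals (ind_intble q s 0 s) (ind_intble q s s (π/2))]
  rw [← GG_int]
  have a : ∫ t in (0:ℝ)..s, ind s t * (cos t * PP q t) = 0 := by
    rw [intervalIntegral.integral_congr_Ioo_of_le h0 (g := fun _ => (0:ℝ))]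
    · simp
    · intro t ht
      simp [ind, not_lt.2 ht.2.le]
  have b : ∫ t in s..(π/2), ind s t * (cos t * PP q t) = ∫ t in s..(π/2), cos t * PP q t := by
    apply intervalIntegral.integral_congr_Ioo_of_le h1
    intro t ht
    simp [ind, ht.1]
  rw [a, b, zero_add]

theorem GG_le (q : ℕ) (s : ℝ) (h0 : 0 ≤ s) (h1 : s ≤ π / 2) : GG q s ≤ GG q (π / 2) := by
  have := II_nonneg q s
  rw [II_eq q s h0 h1] at this
  linarith

theorem GG_refl (q : ℕ) (s : ℝ) : GG q (π - s) = GG q s := by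
  rw [show π - s = -s + π by ring, GG_add_pi, GG_neg, neg_neg]

theorem err_pt (q : ℕ) (θ : ℝ) (h0 : 0 ≤ θ) (h1 : θ ≤ 2 * π) :
    |sgn (cos θ) * GG q (π / 2) - GG q (θ + π / 2)| ≤ II q |θ - π / 2| + II q |θ - 3 * π / 2| := by
  have hp := pi_pos
  have n1 := II_nonneg q |θ - π / 2|
  have n2 := II_nonneg q |θ - 3 * π / 2|
  rcases le_or_gt θ (π / 2) with h | h
  · have hs : sgn (cos θ) = 1 := by
      unfold sgn
      rw [if_pos (cos_nonneg_of_neg_pi_div_two_le_of_le (by linarith) h)]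
    have e : |θ - π / 2| = π / 2 - θ := by rw [abs_of_nonpos (by linarith)]; ring
    have e2 : GG q (θ + π / 2) = GG q (π / 2 - θ) := by
      rw [← GG_refl]; congr 1; ring
    rw [hs, one_mul, e2, abs_of_nonneg (by linarith [GG_le q (π / 2 - θ) (by linarith) (by linarith)]),
      ← II_eq q _ (by linarith) (by linarith), ← e]
    linarith
  rcases lt_or_ge θ (3 * π / 2) with h' | h'
  · have hs : sgn (cos θ) = -1 := by
      unfold sgn
      rw [if_neg (not_le.2 (cos_neg_of_pi_div_two_lt_of_lt h (by linarith)))]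
    have e2 : GG q (θ + π / 2) = - GG q (θ - π / 2) := by
      rw [← GG_add_pi]; congr 1; ring
    rcases le_total θ π with h2 | h2
    · have e : |θ - π / 2| = θ - π / 2 := abs_of_nonneg (by linarith)
      rw [hs, e2, abs_of_nonpos (by linarith [GG_le q (θ - π / 2) (by linarith) (by linarith)])]
      have := II_eq q (θ - π / 2) (by linarith) (by linarith)
      rw [e] at *
      linarith
    · have e : |θ - 3 * π / 2| = 3 * π / 2 - θ := by rw [abs_of_nonpos (by linarith)]; ring
      have e3 : GG q (θ - π / 2) = GG q (3 * π / 2 - θ) := by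
        rw [← GG_refl]; congr 1; ring
      rw [hs, e2, e3, abs_of_nonpos (by linarith [GG_le q (3 * π / 2 - θ) (by linarith) (by linarith)])]
      have := II_eq q (3 * π / 2 - θ) (by linarith) (by linarith)
      rw [e] at *
      linarith
  · have hs : sgn (cos θ) = 1 := by
      unfold sgn
      rw [← cos_sub_two_pi, if_pos (cos_nonneg_of_neg_pi_div_two_le_of_le (by linarith) (by linarith))]
    have e : |θ - 3 * π / 2| = θ - 3 * π / 2 := abs_of_nonneg (by linarith)
    have e2 : GG q (θ + π / 2) = GG q (θ - 3 * π / 2) := by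
      have a := GG_add_pi q (θ - 3 * π / 2)
      have b := GG_add_pi q (θ - 3 * π / 2 + π)
      rw [a, neg_neg] at b
      rw [← b]; congr 1; ring
    rw [hs, one_mul, e2, abs_of_nonneg (by linarith [GG_le q (θ - 3 * π / 2) (by linarith) (by linarith)])]
    have := II_eq q (θ - 3 * π / 2) (by linarith) (by linarith)
    rw [e] at *
    linarith

theorem count (n : ℕ) (α r : ℝ) (hr : 0 ≤ r) :
    ((#((range n).filter fun k : ℕ => |(k:ℝ) - α| < r) : ℕ) : ℝ) ≤ 2 * r + 1 := by
  have h : (#((range n).filter fun k : ℕ => |(k:ℝ) - α| < r) : ℕ) ≤ #(Icc ⌈α - r⌉ ⌊α + r⌋) := by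
    apply card_le_card_of_injOn (fun k : ℕ => (k:ℤ))
    · intro k hk
      simp only [coe_filter, Set.mem_setOf_eq, mem_range, abs_lt] at hk
      simp only [coe_Icc, Set.mem_Icc, Int.ceil_le, Int.le_floor, Int.cast_natCast]
      constructor <;> linarith [hk.2.1, hk.2.2]
    · intro a _ b _ hab
      simpa using hab
  rw [Int.card_Icc] at h
  have h2 : ((⌊α + r⌋ + 1 - ⌈α - r⌉).toNat : ℝ) ≤ 2 * r + 1 := by
    rcases le_total 0 (⌊α + r⌋ + 1 - ⌈α - r⌉) with h' | h'
    · have : ((⌊α + r⌋ + 1 - ⌈α - r⌉).toNat : ℝ) = ((⌊α + r⌋ + 1 - ⌈α - r⌉ : ℤ) : ℝ) := by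
        exact_mod_cast Int.toNat_of_nonneg h'
      rw [this]; push_cast
      linarith [Int.floor_le (α + r), Int.le_ceil (α - r)]
    · rw [Int.toNat_of_nonpos h']; simp; linarith
  exact le_trans (by exact_mod_cast h) h2

theorem sum_II (q n : ℕ) (hn : 0 < n) (β : ℝ) :
    ∑ k ∈ range n, II q |2 * π * k / n - β| ≤ (n / (2 * ((q:ℝ) + 2)) + 1) * GG q (π / 2) := by
  have hp := pi_pos
  have hn' : (0:ℝ) < n := by exact_mod_cast hn
  have c := PP_cont q
  unfold II
  rw [← intervalIntegral.integral_finsetSum (fun k _ => ind_intble q _ _ _)]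
  calc _ ≤ ∫ t in (0:ℝ)..(π/2), (n / π * (t * (cos t * PP q t)) + cos t * PP q t) := by
        apply intervalIntegral.integral_mono_on (by positivity)
        · have := IntervalIntegrable.sum (range n) (fun k (_ : k ∈ range n) => ind_intble q |2 * π * k / n - β| 0 (π/2))
          have e : (∑ k ∈ range n, fun t => ind |2 * π * k / n - β| t * (cos t * PP q t)) =
              fun t => ∑ k ∈ range n, ind |2 * π * k / n - β| t * (cos t * PP q t) := by
            ext t; simp
          rw [e] at this
          exact this
        · exact (Continuous.intervalIntegrable (by fun_prop) _ _)
        intro t ht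
        rw [← sum_mul]
        have : ∑ k ∈ range n, ind |2 * π * k / n - β| t ≤ n / π * t + 1 := by
          have e : ∑ k ∈ range n, ind |2 * π * k / n - β| t =
              ((#((range n).filter fun k : ℕ => |(k:ℝ) - n * β / (2 * π)| < n * t / (2 * π)) : ℕ) : ℝ) := by
            rw [card_filter]
            push_cast
            refine sum_congr rfl fun k _ => ?_
            unfold ind
            have : |2 * π * k / n - β| = (2 * π / n) * |(k:ℝ) - n * β / (2 * π)| := by
              rw [← abs_of_pos (show 0 < 2 * π / n by positivity), ← abs_mul]
              congr 1
              field_simp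
            rw [this]
            congr 1
            rw [← lt_div_iff₀' (by positivity)]
            rw [show t / (2 * π / n) = n * t / (2 * π) by field_simp]
          rw [e]
          refine (count n _ _ (by have := ht.1; positivity)).trans (le_of_eq ?_)
          field_simp
        calc _ ≤ (n / π * t + 1) * (cos t * PP q t) :=
              mul_le_mul_of_nonneg_right this (M_nonneg q t ht.1 ht.2)
          _ = _ := by ring
    _ = n / π * (∫ t in (0:ℝ)..(π/2), t * (cos t * PP q t)) + GG q (π / 2) := by
        rw [intervalIntegral.integral_add
          (Continuous.intervalIntegrable (by fun_prop) _ _)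
          (Continuous.intervalIntegrable (by fun_prop) _ _),
          intervalIntegral.integral_const_mul, GG_int, GG_zero, sub_zero]
    _ ≤ n / π * (π / (2 * (q + 2)) * GG q (π / 2)) + GG q (π / 2) := by
        gcongr
        exact int_tM q
    _ = _ := by field_simp

theorem err_sum (q n : ℕ) (hn : 0 < n) :
    ∑ k ∈ range n, |sgn (cos (2 * π * k / n)) * GG q (π / 2) - GG q (2 * π * k / n + π / 2)| ≤
      (n / ((q:ℝ) + 2) + 2) * GG q (π / 2) := by
  have hp := pi_pos
  have hn' : (0:ℝ) < n := by exact_mod_cast hn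
  calc _ ≤ ∑ k ∈ range n, (II q |2 * π * k / n - π / 2| + II q |2 * π * k / n - 3 * π / 2|) := by
        refine sum_le_sum fun k hk => err_pt q _ (by positivity) ?_
        rw [div_le_iff₀ hn']
        have : (k:ℝ) ≤ n := by exact_mod_cast (mem_range.1 hk).le
        gcongr
    _ ≤ _ := by
        rw [sum_add_distrib]
        have a := sum_II q n hn (π / 2)
        have b := sum_II q n hn (3 * π / 2)
        refine (add_le_add a b).trans (le_of_eq ?_)
        field_simp
        ring
theorem sgn_grid (n k : ℕ) (hn : Odd n) (hk : k < n) :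
    sgn (cos (2 * π * k / n)) = if k ∈ Ico (n / 4 + 1) (3 * n / 4 + 1) then -1 else 1 := by
  have hp := pi_pos
  have hn0 : 0 < n := by omega
  have hn' : (0:ℝ) < n := by exact_mod_cast hn0
  obtain ⟨u, hu⟩ := hn
  split_ifs with h
  · rw [mem_Ico] at h
    have h1 : (n:ℝ) < 4 * k := by exact_mod_cast (by omega : n < 4 * k)
    have h2 : 4 * (k:ℝ) < 3 * n := by exact_mod_cast (by omega : 4 * k < 3 * n)
    unfold sgn
    rw [if_neg (not_le.2 (cos_neg_of_pi_div_two_lt_of_lt ?_ ?_))]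
    · rw [lt_div_iff₀ hn']; nlinarith
    · rw [div_lt_iff₀ hn']; nlinarith
  · rw [mem_Ico] at h
    unfold sgn
    rw [if_pos]
    rcases (by omega : 4 * k ≤ n ∨ 3 * n ≤ 4 * k) with h1 | h1
    · have h1' : 4 * (k:ℝ) ≤ n := by exact_mod_cast h1
      apply cos_nonneg_of_neg_pi_div_two_le_of_le
      · have : 0 ≤ 2 * π * k / n := by positivity
        linarith
      · rw [div_le_iff₀ hn']; nlinarith
    · have h1' : 3 * (n:ℝ) ≤ 4 * k := by exact_mod_cast h1
      have h2 : (k:ℝ) ≤ n := by exact_mod_cast hk.le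
      rw [← cos_sub_two_pi]
      apply cos_nonneg_of_neg_pi_div_two_le_of_le
      · have : 3 * π / 2 ≤ 2 * π * k / n := by
          rw [le_div_iff₀ hn']; nlinarith
        linarith
      · have : 2 * π * k / n ≤ 2 * π := by
          rw [div_le_iff₀ hn']; nlinarith
        linarith

theorem sin_lower (n N : ℕ) (hn : 0 < n) : 2 * (tdist n N : ℝ) / n ≤ |sin (π * N / n)| := by
  have hp := pi_pos
  have hn' : (0:ℝ) < n := by exact_mod_cast hn
  have hr : N % n < n := Nat.mod_lt _ hn
  have hr' : ((N % n : ℕ) : ℝ) ≤ n := by exact_mod_cast hr.le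
  have e : |sin (π * N / n)| = |sin (π * (N % n : ℕ) / n)| := by
    have : (N:ℝ) = n * (N / n : ℕ) + (N % n : ℕ) := by exact_mod_cast (Nat.div_add_mod N n).symm
    conv_lhs => rw [this]
    rw [show π * (n * (N / n : ℕ) + (N % n : ℕ) : ℝ) / n = π * (N % n : ℕ) / n + (N / n : ℕ) * π by field_simp; ring]
    rw [sin_add_nat_mul_pi, abs_mul, abs_pow]; simp
  rw [e]
  set r := N % n with hrdef
  rcases le_total (2 * r) n with h | h
  · have h' : 2 * (r:ℝ) ≤ n := by exact_mod_cast h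
    have t : tdist n N = r := by unfold tdist; omega
    rw [t]
    have := mul_le_sin (x := π * r / n) (by positivity) (by rw [div_le_iff₀ hn']; nlinarith)
    refine le_trans (le_of_eq ?_) (this.trans (le_abs_self _))
    field_simp
  · have h' : (n:ℝ) ≤ 2 * r := by exact_mod_cast h
    have t : tdist n N = n - r := by unfold tdist; omega
    rw [t, Nat.cast_sub hr.le]
    have := mul_le_sin (x := π * (n - r) / n) (by apply div_nonneg _ hn'.le; apply mul_nonneg hp.le; linarith) (by rw [div_le_iff₀ hn']; nlinarith)
    rw [show π * (n - r) / n = π - π * r / n by field_simp, sin_pi_sub] at this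
    refine le_trans (le_of_eq ?_) (this.trans (le_abs_self _))
    field_simp

theorem tdist_pos (n N : ℕ) (hn : 0 < n) (h : ¬ n ∣ N) : 0 < tdist n N := by
  unfold tdist
  have : N % n ≠ 0 := fun h' => h (Nat.dvd_of_mod_eq_zero h')
  have := Nat.mod_lt N hn
  omega

theorem exp_sum (n N : ℕ) (hn : Odd n) (h : ¬ n ∣ N) (φ : ℝ) :
    |∑ k ∈ range n, sgn (cos (2 * π * k / n)) * sin (2 * π * N * k / n + φ)| ≤ n / tdist n N := by
  have hn0 : 0 < n := hn.pos
  have hn' : (0:ℝ) < n := by exact_mod_cast hn0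
  have ht : (0:ℝ) < tdist n N := by exact_mod_cast tdist_pos n N hn0 h
  have hsl := sin_lower n N hn0
  set z : ℂ := Complex.exp (Complex.I * ((2 * π * N / n : ℝ) : ℂ)) with hz
  have hz1 : 4 * (tdist n N : ℝ) / n ≤ ‖z - 1‖ := by
    rw [hz, Complex.norm_exp_I_mul_ofReal_sub_one, norm_mul, Real.norm_eq_abs, Real.norm_eq_abs,
      show 2 * π * N / n / 2 = π * N / n by ring, abs_two]
    calc _ = 2 * (2 * (tdist n N : ℝ) / n) := by ring
      _ ≤ _ := by linarith
  have hzpos : 0 < ‖z - 1‖ := lt_of_lt_of_le (by positivity) hz1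
  have hzne : z ≠ 1 := fun h => by rw [h] at hzpos; simp at hzpos
  have hznorm : ‖z‖ = 1 := Complex.norm_exp_I_mul_ofReal _
  have hzn : z ^ n = 1 := by
    rw [hz, ← Complex.exp_nat_mul, Complex.exp_eq_one_iff]
    refine ⟨N, ?_⟩
    push_cast
    have : (n:ℂ) ≠ 0 := by exact_mod_cast hn0.ne'
    field_simp
  have hsin : ∀ k : ℕ, sin (2 * π * N * k / n + φ) = (Complex.exp (Complex.I * φ) * z ^ k).im := by
    intro k
    rw [hz, ← Complex.exp_nat_mul, ← Complex.exp_add,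
      show Complex.I * φ + k * (Complex.I * ((2 * π * N / n : ℝ) : ℂ)) = ((2 * π * N * k / n + φ : ℝ) : ℂ) * Complex.I by push_cast; ring,
      Complex.exp_ofReal_mul_I_im]
  set W : ℂ := ∑ k ∈ range n, ((sgn (cos (2 * π * k / n)) : ℝ) : ℂ) * (Complex.exp (Complex.I * φ) * z ^ k) with hW
  have e1 : ∑ k ∈ range n, sgn (cos (2 * π * k / n)) * sin (2 * π * N * k / n + φ) = W.im := by
    rw [hW, Complex.im_sum]
    refine sum_congr rfl fun k _ => ?_
    rw [hsin, Complex.im_ofReal_mul]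
  have e2 : W = Complex.exp (Complex.I * φ) * (-2 * ∑ k ∈ Ico (n / 4 + 1) (3 * n / 4 + 1), z ^ k) := by
    have g0 : ∑ k ∈ range n, z ^ k = 0 := by
      rw [geom_sum_eq hzne, hzn]; simp
    have g1 : ∑ k ∈ Ico (n / 4 + 1) (3 * n / 4 + 1), z ^ k =
        ∑ k ∈ range n, if k ∈ Ico (n / 4 + 1) (3 * n / 4 + 1) then z ^ k else 0 := by
      rw [← sum_filter]
      congr 1
      ext k
      simp only [mem_filter, mem_range, mem_Ico]
      omega
    have g2 : W = Complex.exp (Complex.I * φ) * (∑ k ∈ range n, z ^ k - 2 * ∑ k ∈ Ico (n / 4 + 1) (3 * n / 4 + 1), z ^ k) := by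
      rw [g1, hW, mul_sum, ← sum_sub_distrib, mul_sum]
      refine sum_congr rfl fun k hk => ?_
      rw [sgn_grid n k hn (mem_range.1 hk)]
      split_ifs <;> push_cast <;> ring
    rw [g2, g0]; ring
  have e3 : ‖W‖ ≤ n / tdist n N := by
    rw [e2, norm_mul, Complex.norm_exp_I_mul_ofReal, one_mul, norm_mul, geom_sum_Ico hzne (by omega), norm_div]
    have : ‖z ^ (3 * n / 4 + 1) - z ^ (n / 4 + 1)‖ ≤ 2 := by
      refine (norm_sub_le _ _).trans ?_
      rw [norm_pow, norm_pow, hznorm]; norm_num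
    calc _ ≤ 2 * (2 / (4 * (tdist n N : ℝ) / n)) := by
          simp only [norm_neg, Complex.norm_ofNat]
          gcongr
      _ = _ := by field_simp; norm_num
  rw [e1]
  exact (Complex.abs_im_le_norm _).trans e3

theorem fold_sum (s : Finset ℕ) (φ : ℕ → ℤ) (hφ : Set.InjOn φ s) (m : ℕ)
    (hm : ∀ j ∈ s, (φ j).natAbs ∈ Icc 1 m) (F : ℕ → ℝ) (hF : ∀ ℓ, 0 ≤ F ℓ) :
    ∑ j ∈ s, F (φ j).natAbs ≤ 2 * ∑ ℓ ∈ Icc 1 m, F ℓ := by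
  rw [← sum_fiberwise_of_maps_to hm, mul_sum]
  refine sum_le_sum fun ℓ _ => ?_
  have : ∑ i ∈ s with (φ i).natAbs = ℓ, F (φ i).natAbs = #{i ∈ s | (φ i).natAbs = ℓ} * F ℓ := by
    rw [← nsmul_eq_mul, ← sum_const]
    refine sum_congr rfl fun i hi => ?_
    rw [(mem_filter.1 hi).2]
  rw [this]
  have hc : #{i ∈ s | (φ i).natAbs = ℓ} ≤ #({(ℓ:ℤ), -(ℓ:ℤ)} : Finset ℤ) := by
    apply card_le_card_of_injOn φ
    · intro i hi
      have := (mem_filter.1 (mem_coe.1 hi)).2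
      simp only [coe_insert, coe_singleton, Set.mem_insert_iff, Set.mem_singleton_iff]
      omega
    · exact hφ.mono (by intro i hi; exact (mem_filter.1 (mem_coe.1 hi)).1)
  have hc2 : #{i ∈ s | (φ i).natAbs = ℓ} ≤ 2 := hc.trans card_le_two
  exact mul_le_mul_of_nonneg_right (by exact_mod_cast hc2) (hF ℓ)

theorem pair_sum (q m : ℕ) (hq : 2 * q + 1 ≤ m) (F : ℕ → ℝ) (hF : ∀ ℓ, 0 ≤ F ℓ) :
    ∑ i ∈ range (q + 1), ∑ j ∈ range (q + 1), |cc q i * cc q j| * F (2 * ((i:ℤ) - j) + 1).natAbs ≤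
      2 * sig q * ∑ ℓ ∈ Icc 1 m, F ℓ := by
  set Sg := ∑ ℓ ∈ Icc 1 m, F ℓ
  have h1 : ∑ i ∈ range (q + 1), ∑ j ∈ range (q + 1), cc q i ^ 2 * F (2 * ((i:ℤ) - j) + 1).natAbs ≤ sig q * (2 * Sg) := by
    unfold sig
    rw [sum_mul]
    refine sum_le_sum fun i hi => ?_
    rw [← mul_sum]
    refine mul_le_mul_of_nonneg_left ?_ (sq_nonneg _)
    apply fold_sum (range (q + 1)) (fun j => 2 * ((i:ℤ) - j) + 1) _ m _ F hF
    · intro a _ b _ hab; simp only at hab; omega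
    · intro j hj; simp only [mem_Icc, mem_range] at *; omega
  have h2 : ∑ i ∈ range (q + 1), ∑ j ∈ range (q + 1), cc q j ^ 2 * F (2 * ((i:ℤ) - j) + 1).natAbs ≤ sig q * (2 * Sg) := by
    rw [sum_comm]
    unfold sig
    rw [sum_mul]
    refine sum_le_sum fun j hj => ?_
    rw [← mul_sum]
    refine mul_le_mul_of_nonneg_left ?_ (sq_nonneg _)
    apply fold_sum (range (q + 1)) (fun i => 2 * ((i:ℤ) - j) + 1) _ m _ F hF
    · intro a _ b _ hab; simp only at hab; omega
    · intro i hi; simp only [mem_Icc, mem_range] at *; omega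
  have h3 : ∑ i ∈ range (q + 1), ∑ j ∈ range (q + 1), |cc q i * cc q j| * F (2 * ((i:ℤ) - j) + 1).natAbs ≤
      ∑ i ∈ range (q + 1), ∑ j ∈ range (q + 1), (cc q i ^ 2 * F (2 * ((i:ℤ) - j) + 1).natAbs + cc q j ^ 2 * F (2 * ((i:ℤ) - j) + 1).natAbs) / 2 := by
    refine sum_le_sum fun i _ => sum_le_sum fun j _ => ?_
    rw [← add_mul, mul_div_right_comm]
    refine mul_le_mul_of_nonneg_right ?_ (hF _)
    rw [abs_mul, ← sq_abs (cc q i), ← sq_abs (cc q j)]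
    nlinarith [sq_nonneg (|cc q i| - |cc q j|)]
  have h4 : ∑ i ∈ range (q + 1), ∑ j ∈ range (q + 1), (cc q i ^ 2 * F (2 * ((i:ℤ) - j) + 1).natAbs + cc q j ^ 2 * F (2 * ((i:ℤ) - j) + 1).natAbs) / 2 =
    (∑ i ∈ range (q + 1), ∑ j ∈ range (q + 1), cc q i ^ 2 * F (2 * ((i:ℤ) - j) + 1).natAbs +
    ∑ i ∈ range (q + 1), ∑ j ∈ range (q + 1), cc q j ^ 2 * F (2 * ((i:ℤ) - j) + 1).natAbs) / 2 := by
    simp only [← sum_add_distrib, sum_div]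
  linarith

theorem sin_om_abs (i j : ℕ) (ψ : ℝ) : sin (om i j * ψ) / om i j =
    sin ((2 * ((i:ℤ) - j) + 1).natAbs * ψ) / ((2 * ((i:ℤ) - j) + 1).natAbs : ℝ) := by
  have e : om i j = ((2 * ((i:ℤ) - j) + 1 : ℤ) : ℝ) := by unfold om; push_cast; ring
  rw [e]
  set w := 2 * ((i:ℤ) - j) + 1
  rw [Nat.cast_natAbs]
  rcases abs_choice w with h | h
  · rw [h]
  · rw [h]; push_cast; rw [neg_mul, sin_neg, neg_div_neg_eq]

theorem main_sum (q m n N : ℕ) (hn : n.Prime) (ho : Odd n) (hq : 2 * q + 1 ≤ m) (hm : m < n)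
    (hN : ¬ n ∣ N) :
    |∑ k ∈ range n, sgn (cos (2 * π * k / n)) * GG q (2 * π * N * k / n + π / 2)| ≤
      2 * sig q * ∑ ℓ ∈ Icc 1 m, n / ((ℓ:ℝ) * tdist n (ℓ * N)) := by
  refine le_trans ?_ (pair_sum q m hq (fun ℓ => n / ((ℓ:ℝ) * tdist n (ℓ * N))) (fun ℓ => by positivity))
  unfold GG
  have e : ∑ k ∈ range n, sgn (cos (2 * π * k / n)) * (∑ i ∈ range (q + 1), ∑ j ∈ range (q + 1),
      cc q i * cc q j * (sin (om i j * (2 * π * N * k / n + π / 2)) / om i j)) =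
      ∑ i ∈ range (q + 1), ∑ j ∈ range (q + 1), cc q i * cc q j * (∑ k ∈ range n, sgn (cos (2 * π * k / n)) * (sin (om i j * (2 * π * N * k / n + π / 2)) / om i j)) := by
    simp only [mul_sum]
    rw [sum_comm]
    refine sum_congr rfl fun i _ => ?_
    rw [sum_comm]
    refine sum_congr rfl fun j _ => sum_congr rfl fun k _ => ?_
    ring
  rw [e]
  refine (abs_sum_le_sum_abs _ _).trans (sum_le_sum fun i hi => ?_)
  refine (abs_sum_le_sum_abs _ _).trans (sum_le_sum fun j hj => ?_)
  rw [abs_mul]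
  refine mul_le_mul_of_nonneg_left ?_ (abs_nonneg _)
  simp only [sin_om_abs]
  have hl1 : 1 ≤ (2 * ((i:ℤ) - j) + 1).natAbs := by omega
  have hl2 : (2 * ((i:ℤ) - j) + 1).natAbs < n := by
    rw [mem_range] at hi hj; omega
  generalize (2 * ((i:ℤ) - j) + 1).natAbs = ℓ at hl1 hl2 ⊢
  have hd : ¬ n ∣ ℓ * N := by
    rw [hn.dvd_mul]
    rintro (h | h)
    · exact absurd (Nat.le_of_dvd (by omega) h) (by omega)
    · exact hN h
  have hx := exp_sum n (ℓ * N) ho hd (ℓ * (π / 2))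
  have hl : (0:ℝ) < ℓ := by exact_mod_cast hl1
  have e2 : ∑ k ∈ range n, sgn (cos (2 * π * k / n)) * (sin (ℓ * (2 * π * N * k / n + π / 2)) / ℓ) =
      (∑ k ∈ range n, sgn (cos (2 * π * k / n)) * sin (2 * π * (ℓ * N : ℕ) * k / n + ℓ * (π / 2))) / ℓ := by
    rw [sum_div]
    refine sum_congr rfl fun k _ => ?_
    rw [show (ℓ:ℝ) * (2 * π * N * k / n + π / 2) = 2 * π * (ℓ * N : ℕ) * k / n + ℓ * (π / 2) by push_cast; ring]
    ring
  rw [e2, abs_div, abs_of_pos hl]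
  calc _ ≤ (n / tdist n (ℓ * N) : ℝ) / ℓ := by gcongr
    _ = _ := by rw [div_div, mul_comm]

theorem cos_mod (n N : ℕ) (hn : 0 < n) (f : ℝ → ℝ) (hf : Function.Periodic f (2 * π)) :
    f (2 * π * (N % n : ℕ) / n) = f (2 * π * N / n) := by
  have hn' : (0:ℝ) < n := by exact_mod_cast hn
  have : (N:ℝ) = n * (N / n : ℕ) + (N % n : ℕ) := by exact_mod_cast (Nat.div_add_mod N n).symm
  conv_rhs => rw [this]
  rw [show 2 * π * (n * (N / n : ℕ) + (N % n : ℕ) : ℝ) / n = 2 * π * (N % n : ℕ) / n + (N / n : ℕ) * (2 * π) by field_simp; ring]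
  exact (hf.nat_mul _ _).symm

theorem GG_per (q : ℕ) : Function.Periodic (fun θ => GG q (θ + π / 2)) (2 * π) := by
  intro θ
  show GG q (θ + 2 * π + π / 2) = GG q (θ + π / 2)
  rw [show θ + 2 * π + π / 2 = (θ + π / 2) + π + π by ring, GG_add_pi, GG_add_pi, neg_neg]

theorem sgn_per : Function.Periodic (fun θ => sgn (cos θ)) (2 * π) := by
  intro θ
  show sgn (cos (θ + 2 * π)) = sgn (cos θ)
  rw [cos_add_two_pi]

theorem sum_zmod (n : ℕ) [NeZero n] (φ : ZMod n → ℝ) : ∑ k ∈ range n, φ (k : ZMod n) = ∑ z, φ z := by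
  refine sum_bij' (fun k _ => (k : ZMod n)) (fun z _ => z.val) ?_ ?_ ?_ ?_ ?_
  · intros; exact mem_univ _
  · intro z _; exact mem_range.2 (ZMod.val_lt z)
  · intro k hk; exact ZMod.val_cast_of_lt (mem_range.1 hk)
  · intro z _; exact ZMod.natCast_zmod_val z
  · intros; rfl

theorem core (q m n N : ℕ) (hn : n.Prime) (ho : Odd n) (hq : 2 * q + 1 ≤ m) (hq2 : m + 2 ≤ 2 * q + 4)
    (hm : m < n) (hN : ¬ n ∣ N) :
    |∑ k ∈ range n, sgn (cos (2 * π * k / n)) * sgn (cos (2 * π * N * k / n))| ≤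
      (2 / ((m:ℝ) + 2) + ∑ ℓ ∈ Icc 1 m, 12 / ((ℓ:ℝ) * tdist n (ℓ * N))) * n + 2 := by
  have hn0 := hn.pos
  have hn' : (0:ℝ) < n := by exact_mod_cast hn0
  have : Fact n.Prime := ⟨hn⟩
  have hZl := ZZ_lower q
  have hs := sig_pos q
  have hp := pi_gt_three
  set Z := GG q (π / 2) with hZ
  have hZpos : 0 < Z := lt_of_lt_of_le (by positivity) hZl
  have hA : ∑ k ∈ range n, |sgn (cos (2 * π * N * k / n)) * Z - GG q (2 * π * N * k / n + π / 2)|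
      ≤ (n / ((q:ℝ) + 2) + 2) * Z := by
    refine le_trans (le_of_eq ?_) (err_sum q n hn0)
    let E : ZMod n → ℝ := fun z => |sgn (cos (2 * π * z.val / n)) * Z - GG q (2 * π * z.val / n + π / 2)|
    have hE : ∀ M : ℕ, E (M : ZMod n) = |sgn (cos (2 * π * M / n)) * Z - GG q (2 * π * M / n + π / 2)| := by
      intro M
      simp only [E]
      rw [ZMod.val_natCast]
      have a : sgn (cos (2 * π * (M % n : ℕ) / n)) = _ := cos_mod n M hn0 _ sgn_per
      have b : GG q (2 * π * (M % n : ℕ) / n + π / 2) = _ := cos_mod n M hn0 _ (GG_per q)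
      rw [a, b]
    have hNz : (N : ZMod n) ≠ 0 := by rwa [Ne, ZMod.natCast_eq_zero_iff]
    have e1 : ∑ k ∈ range n, |sgn (cos (2 * π * N * k / n)) * Z - GG q (2 * π * N * k / n + π / 2)|
        = ∑ k ∈ range n, E ((N : ZMod n) * (k : ZMod n)) := by
      refine sum_congr rfl fun k _ => ?_
      rw [← Nat.cast_mul, hE]
      push_cast
      rw [show 2 * π * ((N:ℝ) * k) / n = 2 * π * N * k / n by ring]
    rw [e1, sum_zmod n (fun z => E ((N : ZMod n) * z))]
    rw [Fintype.sum_equiv (Equiv.mulLeft₀ (N : ZMod n) hNz) (fun z => E ((N : ZMod n) * z)) E (fun z => rfl), ← sum_zmod n E]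
    exact sum_congr rfl fun k _ => hE k
  have hB := main_sum q m n N hn ho hq hm hN
  set Sg := ∑ ℓ ∈ Icc 1 m, n / ((ℓ:ℝ) * tdist n (ℓ * N)) with hSg
  have hSg0 : 0 ≤ Sg := sum_nonneg fun ℓ _ => by positivity
  set S := ∑ k ∈ range n, sgn (cos (2 * π * k / n)) * sgn (cos (2 * π * N * k / n)) with hS
  have hC : |S| * Z ≤ (n / ((q:ℝ) + 2) + 2) * Z + 2 * sig q * Sg := by
    have e : S * Z = ∑ k ∈ range n, sgn (cos (2 * π * k / n)) * (sgn (cos (2 * π * N * k / n)) * Z - GG q (2 * π * N * k / n + π / 2)) + ∑ k ∈ range n, sgn (cos (2 * π * k / n)) * GG q (2 * π * N * k / n + π / 2) := by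
      rw [← sum_add_distrib, hS, sum_mul]
      exact sum_congr rfl fun k _ => by ring
    have : |S| * Z = |S * Z| := by rw [abs_mul, abs_of_pos hZpos]
    rw [this, e]
    refine (abs_add_le _ _).trans (add_le_add (le_trans ?_ hA) hB)
    refine (abs_sum_le_sum_abs _ _).trans (sum_le_sum fun k _ => ?_)
    rw [abs_mul]
    have : |sgn (cos (2 * π * k / n))| = 1 := by unfold sgn; split_ifs <;> simp
    rw [this, one_mul]
  have hD : 2 * sig q * Sg ≤ 12 * Sg * Z := by
    have : sig q ≤ 2 * Z := by nlinarith
    nlinarith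
  have hE : |S| ≤ n / ((q:ℝ) + 2) + 2 + 12 * Sg := by
    apply le_of_mul_le_mul_right _ hZpos
    linarith
  have hF : (∑ ℓ ∈ Icc 1 m, 12 / ((ℓ:ℝ) * tdist n (ℓ * N))) * n = 12 * Sg := by
    rw [hSg, sum_mul, mul_sum]
    exact sum_congr rfl fun ℓ _ => by ring
  have hG : n / ((q:ℝ) + 2) ≤ 2 / ((m:ℝ) + 2) * n := by
    have : (m:ℝ) + 2 ≤ 2 * q + 4 := by exact_mod_cast hq2
    rw [div_mul_eq_mul_div, div_le_div_iff₀ (by positivity) (by positivity)]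
    nlinarith
  rw [add_mul, hF]
  linarith

theorem stmt16 :
    ∃ C : ℝ, 0 < C ∧
      ∀ (n : ℕ), n.Prime → Odd n → ∀ (a b : ℕ), 1 ≤ a → a ≤ n - 1 → 1 ≤ b → b ≤ n - 1 →
        ∀ (m : ℕ), 1 ≤ m → m < n →
          |∑ k ∈ Finset.Icc 1 n,
              sgn (Real.cos (2 * π * a * k / n)) * sgn (Real.cos (2 * π * b * k / n))| ≤
            (2 / ((m : ℝ) + 2) +
              ∑ ℓ ∈ Finset.Icc 1 m,
                12 / ((ℓ : ℝ) * (tdist n (ℓ * ((a : ZMod n)⁻¹ * (b : ZMod n)).val) : ℝ))) * n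
            + C := by
  refine ⟨2, by norm_num, ?_⟩
  intro n hn ho a b ha ha' hb hb' m hm hmn
  have hn0 := hn.pos
  have : Fact n.Prime := ⟨hn⟩
  have haz : (a : ZMod n) ≠ 0 := by
    rw [Ne, ZMod.natCast_eq_zero_iff]
    intro h; have := Nat.le_of_dvd (by omega) h; omega
  have hbz : (b : ZMod n) ≠ 0 := by
    rw [Ne, ZMod.natCast_eq_zero_iff]
    intro h; have := Nat.le_of_dvd (by omega) h; omega
  set c : ZMod n := (a : ZMod n)⁻¹ * (b : ZMod n) with hc
  have hcz : c ≠ 0 := mul_ne_zero (inv_ne_zero haz) hbz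
  have hN : ¬ n ∣ c.val := by
    rw [← ZMod.natCast_eq_zero_iff, ZMod.natCast_zmod_val]; exact hcz
  have key := core ((m - 1) / 2) m n c.val hn ho (by omega) (by omega) hmn hN
  refine le_trans (le_of_eq ?_) key
  congr 1
  let F : ZMod n → ℝ := fun z => sgn (cos (2 * π * z.val / n))
  have hF : ∀ M : ℕ, F (M : ZMod n) = sgn (cos (2 * π * M / n)) := by
    intro M
    simp only [F]
    rw [ZMod.val_natCast]
    exact cos_mod n M hn0 _ sgn_per
  have hF2 : ∀ A k : ℕ, sgn (cos (2 * π * A * k / n)) = F ((A : ZMod n) * (k : ZMod n)) := by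
    intro A k
    rw [← Nat.cast_mul, hF]
    push_cast
    rw [show 2 * π * ((A:ℝ) * k) / n = 2 * π * A * k / n by ring]
  have e1 : ∑ k ∈ range n, sgn (cos (2 * π * k / n)) * sgn (cos (2 * π * c.val * k / n)) =
      ∑ z, F z * F (c * z) := by
    rw [← sum_zmod n (fun z => F z * F (c * z))]
    refine sum_congr rfl fun k _ => ?_
    rw [hF2, hF, ZMod.natCast_zmod_val]
  have e2 : ∑ k ∈ Finset.Icc 1 n, sgn (Real.cos (2 * π * a * k / n)) * sgn (Real.cos (2 * π * b * k / n))
      = ∑ z, F ((a : ZMod n) * z) * F ((b : ZMod n) * z) := by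
    simp only [hF2]
    rw [← sum_zmod n (fun z => F ((a : ZMod n) * z) * F ((b : ZMod n) * z))]
    have h1 : Finset.Icc 1 n = Finset.Ico 1 (n + 1) := by ext; simp
    rw [h1, sum_Ico_eq_sub _ (by omega), sum_range_succ]
    simp
  rw [e1, e2]
  refine Fintype.sum_equiv (Equiv.mulLeft₀ (a : ZMod n) haz) _ _ (fun z => ?_)
  simp only [Equiv.mulLeft₀_apply]
  congr 2
  rw [hc]
  field_simp
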